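/- For every z > 2, the quantity R₂₁ = Σᵢ₌₁ⁿ ∫_{−∞}^1 E[1{W̄⁽ⁱ⁾ + x̄ᵢ ≤ z} − 1{W̄⁽ⁱ⁾ + t ≤ z}] K̄ᵢ(t) dt satisfies |R₂₁| ≤ 30 e^{1/2} · e^{−z/2} · (β₂ + β₃). -/

import Mathlib

open MeasureTheory ProbabilityTheory Real

/-- The standard normal cumulative distribution function. -/
noncomputable def Phi (z : ℝ) : ℝ :=
  (Real.sqrt (2 * Real.pi))⁻¹ * ∫ u in Set.Iic z, Real.exp (-u ^ 2 / 2)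

/-- The bounded solution `f_z` of the Stein equation
`f'(w) - w f(w) = 1{w ≤ z} - Φ(z)`. -/
noncomputable def fz (z w : ℝ) : ℝ :=
  if w ≤ z then Real.sqrt (2 * Real.pi) * Real.exp (w ^ 2 / 2) * Phi w * (1 - Phi z)
  else Real.sqrt (2 * Real.pi) * Real.exp (w ^ 2 / 2) * Phi z * (1 - Phi w)

/-- The derivative `f_z'`, expressed via the Stein equation. -/
noncomputable def fz' (z w : ℝ) : ℝ :=
  w * fz z w + (if w ≤ z then 1 else 0) - Phi z

/-- The truncation `x̄ᵢ = ξᵢ 1{ξᵢ ≤ 1}`. -/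
noncomputable def xbar {Ω : Type*} {n : ℕ} (ξ : Fin n → Ω → ℝ) (i : Fin n) (ω : Ω) : ℝ :=
  if ξ i ω ≤ 1 then ξ i ω else 0

/-- `W̄ = ∑ᵢ x̄ᵢ`. -/
noncomputable def Wbar {Ω : Type*} {n : ℕ} (ξ : Fin n → Ω → ℝ) (ω : Ω) : ℝ :=
  ∑ i, xbar ξ i ω

/-- `W̄⁽ⁱ⁾ = W̄ - x̄ᵢ`. -/
noncomputable def Wbari {Ω : Type*} {n : ℕ} (ξ : Fin n → Ω → ℝ) (i : Fin n) (ω : Ω) : ℝ :=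
  Wbar ξ ω - xbar ξ i ω

/-- `K̄ᵢ(t) = E[x̄ᵢ (1{0 ≤ t ≤ x̄ᵢ} - 1{x̄ᵢ ≤ t < 0})]`. -/
noncomputable def Kbar {Ω : Type*} [MeasureSpace Ω] {n : ℕ} (ξ : Fin n → Ω → ℝ)
    (i : Fin n) (t : ℝ) : ℝ :=
  ∫ ω, xbar ξ i ω * ((if 0 ≤ t ∧ t ≤ xbar ξ i ω then (1 : ℝ) else 0)
    - (if xbar ξ i ω ≤ t ∧ t < 0 then (1 : ℝ) else 0))

/-- `β₂ = ∑ᵢ E[ξᵢ² 1{|ξᵢ| > 1}]`. -/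
noncomputable def beta2 {Ω : Type*} [MeasureSpace Ω] {n : ℕ} (ξ : Fin n → Ω → ℝ) : ℝ :=
  ∑ i, ∫ ω, (if 1 < |ξ i ω| then (ξ i ω) ^ 2 else 0)

/-- `β₃ = ∑ᵢ E[|ξᵢ|³ 1{|ξᵢ| ≤ 1}]`. -/
noncomputable def beta3 {Ω : Type*} [MeasureSpace Ω] {n : ℕ} (ξ : Fin n → Ω → ℝ) : ℝ :=
  ∑ i, ∫ ω, (if |ξ i ω| ≤ 1 then |ξ i ω| ^ 3 else 0)

/-!
The sums `W̄⁽ⁱ⁾` satisfy a non-uniform concentration inequality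
`P(a ≤ W̄⁽ⁱ⁾ ≤ b) ≤ e^{-a/2} (5 min(1, b - a) + 20 (β₂ + β₃))`. It comes from comparing two
estimates of `E[W f(W)]`, where `f(w) = e^{w/2} ρ(w)` and the ramp `ρ` has slope one slightly beyond
`[a, b]`: the one-sided truncation bounds the exponential moments of `W`, hence `E[W f(W)]` from
above, while removing one summand at a time bounds it from below by `e^{a/2} P(a ≤ W ≤ b)` times a
constant, up to an error of order `β₂ + β₃`.

For fixed values `x` of `x̄ᵢ` and `t`, the expectation in `R₂₁` is up to sign the probability that
`W̄⁽ⁱ⁾` lies in an interval of length `|x - t|` to the right of `z - 1`. It remains to average over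
the independent `x̄ᵢ` and to integrate against `K̄ᵢ`, using that `|K̄ᵢ|` has mass at most `E x̄ᵢ²`,
that `E[min(1, |x̄ᵢ|)] E[x̄ᵢ²] ≤ E[min(1, |x̄ᵢ|) x̄ᵢ²]` by Chebyshev's association inequality, and
that the right-hand sides sum to at most `β₂ + β₃`.
-/

lemma exp_le_one_add_self_add_sq {x : ℝ} (hx : x ≤ 1) : exp x ≤ 1 + x + x ^ 2 := by
  rcases le_or_gt (-1) x with h | h
  · linarith [(abs_le.1 (abs_exp_sub_one_sub_id_le (abs_le.2 ⟨h, hx⟩))).2]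
  · have : exp x ≤ 1 := exp_le_one_iff.2 (by linarith)
    nlinarith

lemma min_one_abs_sub_le (x y : ℝ) : min 1 |x - y| ≤ min 1 |x| + min 1 |y| := by
  have hxy : |x - y| ≤ |x| + |y| := abs_sub x y
  have hx := abs_nonneg x
  have hy := abs_nonneg y
  rcases min_cases 1 |x - y| with h | h <;> rcases min_cases 1 |x| with h' | h' <;>
    rcases min_cases 1 |y| with h'' | h'' <;> linarith

lemma min_one_abs_nonneg (x : ℝ) : 0 ≤ min 1 |x| := le_min zero_le_one (abs_nonneg x)

section FiniteMeasure

variable {Ω : Type*} [MeasurableSpace Ω] {μ : Measure Ω} [IsFiniteMeasure μ]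

lemma abs_integral_ite_add_le_sub_le {W : Ω → ℝ} (hW : Measurable W) (z x t : ℝ) :
    |∫ ω, ((if W ω + x ≤ z then (1 : ℝ) else 0) - (if W ω + t ≤ z then (1 : ℝ) else 0)) ∂μ| ≤
      μ.real (W ⁻¹' Set.Icc (z - max x t) (z - min x t)) := by
  have hA : MeasurableSet (W ⁻¹' Set.Icc (z - max x t) (z - min x t)) := hW measurableSet_Icc
  rw [← integral_indicator_one hA, ← norm_eq_abs]
  refine norm_integral_le_of_norm_le ((integrable_const (1 : ℝ)).indicator hA)
    (ae_of_all _ fun ω ↦ ?_)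
  by_cases hω : W ω ∈ Set.Icc (z - max x t) (z - min x t)
  · rw [Set.indicator_of_mem (by exact hω)]
    split_ifs <;> simp
  · rw [Set.indicator_of_notMem (by exact hω)]
    rcases not_and_or.1 hω with h | h
    · rw [if_pos (by linarith [le_max_left x t]), if_pos (by linarith [le_max_right x t])]
      simp
    · rw [if_neg (by linarith [min_le_left x t]), if_neg (by linarith [min_le_right x t])]
      simp

/- AM-GM on `A`: the factor `exp (a / 2)` is absorbed by `exp (W / 2)`, the deviation of `S` from
its mean by the variance. -/
lemma exp_half_mul_integral_mul_measureReal_le {W S : Ω → ℝ} {A : Set Ω} {a α : ℝ}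
    (hA : MeasurableSet A) (haW : ∀ ω ∈ A, a ≤ W ω) (hW : Integrable (fun ω ↦ exp (W ω)) μ)
    (hS : MemLp S 2 μ) (hα : 0 < α) :
    exp (a / 2) * ((∫ ω, S ω ∂μ) * μ.real A) ≤
      exp (a / 2) * (∫ ω in A, S ω ∂μ) + (α * ∫ ω, exp (W ω) ∂μ + α⁻¹ * Var[S; μ]) / 2 := by
  set m := ∫ ω, S ω ∂μ
  have hSm : Integrable (fun ω ↦ (S ω - m) ^ 2) μ := (hS.sub (memLp_const m)).integrable_sq
  have hdom : Integrable (fun ω ↦ (α * exp (W ω) + α⁻¹ * (S ω - m) ^ 2) / 2) μ :=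
    ((hW.const_mul α).add (hSm.const_mul α⁻¹)).div_const 2
  have amgm : ∀ ω ∈ A, exp (a / 2) * (m - S ω) ≤ (α * exp (W ω) + α⁻¹ * (S ω - m) ^ 2) / 2 := by
    intro ω hω
    have h := two_mul_le_add_mul_sq (a := exp (a / 2)) (b := m - S ω) hα
    rw [← exp_nat_mul, Nat.cast_ofNat, mul_div_cancel₀ a two_ne_zero, sub_sq_comm] at h
    have hexp : α * exp a ≤ α * exp (W ω) := by gcongr; exact haW ω hω
    linarith
  have deviation : exp (a / 2) * (m * μ.real A - ∫ ω in A, S ω ∂μ) ≤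
      (α * ∫ ω, exp (W ω) ∂μ + α⁻¹ * Var[S; μ]) / 2 :=
    calc exp (a / 2) * (m * μ.real A - ∫ ω in A, S ω ∂μ)
        = ∫ ω in A, exp (a / 2) * (m - S ω) ∂μ := by
          rw [integral_const_mul, integral_sub (integrable_const m)
            (hS.integrable one_le_two).integrableOn, setIntegral_const, smul_eq_mul, mul_comm m]
      _ ≤ ∫ ω in A, (α * exp (W ω) + α⁻¹ * (S ω - m) ^ 2) / 2 ∂μ :=
          setIntegral_mono_on (((integrable_const m).sub
            (hS.integrable one_le_two)).const_mul _).integrableOn hdom.integrableOn hA amgm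
      _ ≤ ∫ ω, (α * exp (W ω) + α⁻¹ * (S ω - m) ^ 2) / 2 ∂μ :=
          setIntegral_le_integral hdom (ae_of_all _ fun ω ↦ by positivity)
      _ = (α * ∫ ω, exp (W ω) ∂μ + α⁻¹ * Var[S; μ]) / 2 := by
          rw [integral_div, integral_add (hW.const_mul α) (hSm.const_mul α⁻¹), integral_const_mul,
            integral_const_mul, variance_eq_integral hS.aemeasurable]
  linarith

lemma integrable_min_one_abs {X : Ω → ℝ} (hX : Integrable X μ) :
    Integrable (fun ω ↦ min 1 |X ω|) μ :=
  (integrable_const 1).inf hX.abs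

lemma integrable_min_one_abs_mul_sq {X : Ω → ℝ} (hX : MemLp X 2 μ) :
    Integrable (fun ω ↦ min 1 |X ω| * X ω ^ 2) μ := by
  refine hX.integrable_sq.bdd_mul (c := 1)
    (integrable_min_one_abs (hX.integrable one_le_two)).aestronglyMeasurable
    (ae_of_all _ fun ω ↦ ?_)
  rw [norm_of_nonneg (min_one_abs_nonneg _)]
  exact min_le_left _ _

lemma integrable_add_mul_min_one_abs_mul_sq {X : Ω → ℝ} (hX : MemLp X 2 μ) (c d : ℝ) :
    Integrable (fun ω ↦ (c + d * min 1 |X ω|) * X ω ^ 2) μ := by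
  simp only [add_mul, mul_assoc]
  exact (hX.integrable_sq.const_mul c).add ((integrable_min_one_abs_mul_sq hX).const_mul d)

lemma integral_add_mul_min_one_abs_mul_sq {X : Ω → ℝ} (hX : MemLp X 2 μ) (c d : ℝ) :
    ∫ ω, (c + d * min 1 |X ω|) * X ω ^ 2 ∂μ =
      c * (∫ ω, X ω ^ 2 ∂μ) + d * ∫ ω, min 1 |X ω| * X ω ^ 2 ∂μ := by
  simp only [add_mul, mul_assoc]
  rw [integral_add (hX.integrable_sq.const_mul c) ((integrable_min_one_abs_mul_sq hX).const_mul d),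
    integral_const_mul, integral_const_mul]

end FiniteMeasure

section ProbabilityMeasure

variable {Ω : Type*} [MeasurableSpace Ω] {μ : Measure Ω} [IsProbabilityMeasure μ]

lemma integral_mul_integral_le_of_monovary {f g : Ω → ℝ} (hfg : Monovary f g)
    (hf : Integrable f μ) (hg : Integrable g μ) (hmul : Integrable (fun ω ↦ f ω * g ω) μ) :
    (∫ ω, f ω ∂μ) * ∫ ω, g ω ∂μ ≤ ∫ ω, f ω * g ω ∂μ := by
  set F := ∫ ω, f ω ∂μ
  set G := ∫ ω, g ω ∂μ
  set M := ∫ ω, f ω * g ω ∂μ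
  have integrated_once (ω : Ω) : f ω * G + F * g ω ≤ f ω * g ω + M := by
    have h := integral_mono (μ := μ) ((hg.const_mul (f ω)).add (hf.mul_const (g ω)))
      ((integrable_const (f ω * g ω)).add hmul) fun ω' ↦ by
        have := hfg.sub_mul_sub_nonneg ω ω'
        simp only [Pi.add_apply]
        linarith
    rwa [integral_add' (hg.const_mul _) (hf.mul_const _), integral_const_mul, integral_mul_const,
      integral_add' (integrable_const _) hmul, integral_const, probReal_univ, one_smul] at h
  have integrated_twice := integral_mono (μ := μ) ((hf.mul_const G).add (hg.const_mul F))
    (hmul.add (integrable_const M)) integrated_once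
  rw [integral_add' (hf.mul_const _) (hg.const_mul _), integral_const_mul, integral_mul_const,
    integral_add' hmul (integrable_const _), integral_const, probReal_univ, one_smul]
    at integrated_twice
  linarith

lemma integral_min_one_abs_mul_integral_sq_le {X : Ω → ℝ} (hX : MemLp X 2 μ) :
    (∫ ω, min 1 |X ω| ∂μ) * ∫ ω, X ω ^ 2 ∂μ ≤ ∫ ω, min 1 |X ω| * X ω ^ 2 ∂μ :=
  integral_mul_integral_le_of_monovary (fun _ _ h ↦ min_le_min_left 1 (sq_lt_sq.1 h).le)
    (integrable_min_one_abs (hX.integrable one_le_two)) hX.integrable_sq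
    (integrable_min_one_abs_mul_sq hX)

lemma abs_integral_le_integral_of_indepFun {E F : Type*} [MeasurableSpace E] [MeasurableSpace F]
    {X : Ω → E} {W : Ω → F} (hX : Measurable X) (hW : Measurable W) (hXW : IndepFun X W μ)
    {k : E → F → ℝ} (hk : Measurable (Function.uncurry k)) {C : ℝ} (hkC : ∀ x w, |k x w| ≤ C)
    {ψ : E → ℝ} (hψ : Integrable (fun ω ↦ ψ (X ω)) μ)
    (hkψ : ∀ᵐ ω ∂μ, |∫ ω', k (X ω) (W ω') ∂μ| ≤ ψ (X ω)) :
    |∫ ω, k (X ω) (W ω) ∂μ| ≤ ∫ ω, ψ (X ω) ∂μ := by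
  have := Measure.isProbabilityMeasure_map (μ := μ) hX.aemeasurable
  have := Measure.isProbabilityMeasure_map (μ := μ) hW.aemeasurable
  have fubini : ∫ ω, k (X ω) (W ω) ∂μ = ∫ ω, ∫ ω', k (X ω) (W ω') ∂μ ∂μ := by
    calc ∫ ω, k (X ω) (W ω) ∂μ
        = ∫ p, Function.uncurry k p ∂(μ.map X).prod (μ.map W) := by
          rw [← (indepFun_iff_map_prod_eq_prod_map_map hX.aemeasurable hW.aemeasurable).1 hXW,
            integral_map (hX.prodMk hW).aemeasurable hk.aestronglyMeasurable]
          rfl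
      _ = ∫ x, ∫ w, k x w ∂μ.map W ∂μ.map X :=
          integral_prod _ (.of_bound hk.aestronglyMeasurable C (ae_of_all _ fun p ↦ hkC p.1 p.2))
      _ = ∫ ω, ∫ w, k (X ω) w ∂μ.map W ∂μ :=
          integral_map hX.aemeasurable
            hk.stronglyMeasurable.integral_prod_right.aestronglyMeasurable
      _ = ∫ ω, ∫ ω', k (X ω) (W ω') ∂μ ∂μ :=
          integral_congr_ae <| ae_of_all _ fun ω ↦ integral_map hW.aemeasurable
            (hk.comp measurable_prodMk_left).aestronglyMeasurable
  rw [fubini, ← norm_eq_abs]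
  exact norm_integral_le_of_norm_le hψ hkψ

end ProbabilityMeasure

/-- The exponentially weighted ramp: `exp (w / 2)` times the function that vanishes for `w ≤ c`,
has slope one on `[c, c + L]` and equals `L` from there on. It is the test function of the
concentration inequality. -/
noncomputable def expRamp (c L w : ℝ) : ℝ := exp (w / 2) * max 0 (min (w - c) L)

section ExpRamp

variable {c L : ℝ}

lemma expRamp_nonneg (w : ℝ) : 0 ≤ expRamp c L w := by unfold expRamp; positivity

lemma monotone_expRamp : Monotone (expRamp c L) := by
  intro u v huv
  unfold expRamp
  gcongr

lemma measurable_expRamp : Measurable (expRamp c L) := by unfold expRamp; fun_prop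

lemma expRamp_le (hL : 0 ≤ L) (w : ℝ) : expRamp c L w ≤ L * exp (w / 2) := by
  rw [expRamp, mul_comm]
  gcongr
  exact max_le hL (min_le_right _ _)

lemma expRamp_of_mem_Icc {w : ℝ} (hw : w ∈ Set.Icc c (c + L)) :
    expRamp c L w = exp (w / 2) * (w - c) := by
  rw [expRamp, min_eq_left (by linarith [hw.2]), max_eq_right (by linarith [hw.1])]

lemma exp_half_mul_sub_le_expRamp_sub {u v : ℝ} (hu : c ≤ u) (huv : u ≤ v) (hv : v ≤ c + L) :
    exp (v / 2) * (v - u) ≤ expRamp c L v - expRamp c L u := by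
  rw [expRamp_of_mem_Icc ⟨hu.trans huv, hv⟩, expRamp_of_mem_Icc ⟨hu, huv.trans hv⟩]
  have : exp (u / 2) * (u - c) ≤ exp (v / 2) * (u - c) := by
    gcongr
  linarith

lemma mul_expRamp_sub_nonneg (w y : ℝ) : 0 ≤ y * (expRamp c L w - expRamp c L (w - y)) := by
  simpa using (monotone_id.monovary (monotone_expRamp (c := c) (L := L))).sub_mul_sub_nonneg
    (w - y) w

lemma le_two_mul_exp_half_sub_one (w : ℝ) : w ≤ 2 * exp (w / 2 - 1) := by
  linarith [add_one_le_exp (w / 2 - 1)]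

lemma mul_expRamp_le (hL : 0 ≤ L) (w : ℝ) :
    w * expRamp c L w ≤ 2 * L * exp (-1) * exp w :=
  calc w * expRamp c L w ≤ 2 * exp (w / 2 - 1) * expRamp c L w :=
        mul_le_mul_of_nonneg_right (le_two_mul_exp_half_sub_one w) (expRamp_nonneg w)
    _ ≤ 2 * exp (w / 2 - 1) * (L * exp (w / 2)) := by gcongr; exact expRamp_le hL w
    _ = 2 * L * (exp (w / 2 - 1) * exp (w / 2)) := by ring
    _ = 2 * L * exp (-1) * exp w := by
        rw [← exp_add, mul_assoc (2 * L), ← exp_add]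
        ring_nf

end ExpRamp

/-- The square of `x` with one factor clipped at the level `α`: it bounds the increments of the ramp
from below and, unlike `x ^ 2`, has a finite second moment when `x` does. -/
noncomputable def clippedSq (α x : ℝ) : ℝ := |x| * min α |x|

section ClippedSq

variable {α : ℝ}

lemma clippedSq_nonneg (hα : 0 ≤ α) (x : ℝ) : 0 ≤ clippedSq α x :=
  mul_nonneg (abs_nonneg x) (le_min hα (abs_nonneg x))

lemma clippedSq_le (α x : ℝ) : clippedSq α x ≤ α * |x| := by
  rw [clippedSq, mul_comm]
  gcongr
  exact min_le_left _ _

lemma measurable_clippedSq : Measurable (clippedSq α) := by unfold clippedSq; fun_prop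

/- The interval `[a - α, b + α]` on which the ramp has slope one contains the part within distance
`α` of `w` of the segment from `w - y` to `w`. -/
lemma exp_half_mul_clippedSq_le {a b w : ℝ} (hα : 0 ≤ α) (hw : w ∈ Set.Icc a b) (y : ℝ) :
    exp (a / 2) * clippedSq α y ≤
      y * (expRamp (a - α) (b - a + 2 * α) w - expRamp (a - α) (b - a + 2 * α) (w - y)) := by
  obtain ⟨haw, hwb⟩ := hw
  rw [clippedSq, mul_left_comm]
  set r := min α |y|
  have hr0 : 0 ≤ r := le_min hα (abs_nonneg y)
  have hrα : r ≤ α := min_le_left _ _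
  have hry : r ≤ |y| := min_le_right _ _
  have ramp_increment (v : ℝ) (hv : a ≤ v) (hvr : a - α ≤ v - r) (hvb : v ≤ b + α) :
      exp (a / 2) * r ≤ expRamp (a - α) (b - a + 2 * α) v -
        expRamp (a - α) (b - a + 2 * α) (v - r) :=
    calc exp (a / 2) * r ≤ exp (v / 2) * (v - (v - r)) := by rw [sub_sub_cancel]; gcongr
      _ ≤ _ := exp_half_mul_sub_le_expRamp_sub hvr (by linarith) (by linarith)
  rcases le_total 0 y with hy | hy
  · rw [abs_of_nonneg hy] at hry ⊢
    gcongr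
    have := monotone_expRamp (c := a - α) (L := b - a + 2 * α) (sub_le_sub_left hry w)
    linarith [ramp_increment w haw (by linarith) (by linarith)]
  · rw [abs_of_nonpos hy] at hry ⊢
    rw [neg_mul_comm]
    refine mul_le_mul_of_nonpos_left ?_ hy
    have := monotone_expRamp (c := a - α) (L := b - a + 2 * α)
      (show w + r ≤ w - y by linarith)
    have := ramp_increment (w + r) (by linarith) (by linarith) (by linarith)
    rw [add_sub_cancel_right] at this
    linarith

end ClippedSq

section Concentration

variable {Ω ι : Type*} {Y : ι → Ω → ℝ} {s : Finset ι} {j : ι} {a b c L α : ℝ}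

lemma indicator_exp_mul_sum_clippedSq_add_le [DecidableEq ι] (hab : a ≤ b) (hα : 0 ≤ α) (ω : Ω) :
    ((∑ i ∈ s, Y i) ⁻¹' Set.Icc a b).indicator
        (fun ω ↦ exp (a / 2) * (∑ i ∈ s, fun ω ↦ clippedSq α (Y i ω)) ω) ω
      + ∑ j ∈ s, Y j ω * expRamp (a - α) (b - a + 2 * α) ((∑ i ∈ s.erase j, Y i) ω) ≤
      2 * (b - a + 2 * α) * exp (-1) * exp ((∑ i ∈ s, Y i) ω) := by
  set L := b - a + 2 * α
  set w := (∑ i ∈ s, Y i) ω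
  have hw : w = ∑ j ∈ s, Y j ω := Finset.sum_apply ω s Y
  have hwj (j : ι) (hj : j ∈ s) : (∑ i ∈ s.erase j, Y i) ω = w - Y j ω := by
    rw [Finset.sum_erase_eq_sub hj, Pi.sub_apply]
  have telescoped : w * expRamp (a - α) L w =
      ∑ j ∈ s, Y j ω * (expRamp (a - α) L w - expRamp (a - α) L (w - Y j ω))
        + ∑ j ∈ s, Y j ω * expRamp (a - α) L ((∑ i ∈ s.erase j, Y i) ω) := by
    nth_rw 1 [hw, Finset.sum_mul, ← Finset.sum_add_distrib]
    refine Finset.sum_congr rfl fun j hj ↦ ?_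
    rw [hwj j hj]
    ring
  have increments : ((∑ i ∈ s, Y i) ⁻¹' Set.Icc a b).indicator
        (fun ω ↦ exp (a / 2) * (∑ i ∈ s, fun ω ↦ clippedSq α (Y i ω)) ω) ω ≤
      ∑ j ∈ s, Y j ω * (expRamp (a - α) L w - expRamp (a - α) L (w - Y j ω)) := by
    refine Set.indicator_apply_le' (fun hω ↦ ?_) fun _ ↦
      Finset.sum_nonneg fun j _ ↦ mul_expRamp_sub_nonneg w (Y j ω)
    rw [Finset.sum_apply, Finset.mul_sum]
    exact Finset.sum_le_sum fun j _ ↦ exp_half_mul_clippedSq_le hα hω (Y j ω)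
  linarith [mul_expRamp_le (c := a - α) (L := L) (by linarith) w]

variable [MeasurableSpace Ω]

lemma measurable_finsetSum (hmeas : ∀ i, Measurable (Y i)) : Measurable (∑ i ∈ s, Y i) := by
  simpa only [← Finset.sum_apply] using s.measurable_sum fun i _ ↦ hmeas i

variable {μ : Measure Ω}

lemma memLp_clippedSq {X : Ω → ℝ} (hX : MemLp X 2 μ) (hα : 0 ≤ α) :
    MemLp (fun ω ↦ clippedSq α (X ω)) 2 μ := by
  refine hX.norm.const_mul α |>.of_le
    (measurable_clippedSq.comp_aemeasurable hX.aemeasurable).aestronglyMeasurable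
    (ae_of_all _ fun ω ↦ ?_)
  rw [norm_of_nonneg (clippedSq_nonneg hα _)]
  exact (clippedSq_le α _).trans (le_abs_self _)

lemma integrable_clippedSq [IsFiniteMeasure μ] {X : Ω → ℝ} (hX : MemLp X 2 μ)
    (hα : 0 ≤ α) : Integrable (fun ω ↦ clippedSq α (X ω)) μ :=
  (memLp_clippedSq hX hα).integrable one_le_two

lemma indepFun_expRamp_sum (hmeas : ∀ i, Measurable (Y i)) (hindep : iIndepFun Y μ)
    (hj : j ∉ s) : IndepFun (Y j) (fun ω ↦ expRamp c L ((∑ i ∈ s, Y i) ω)) μ :=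
  (hindep.indepFun_finsetSum_of_notMem hmeas hj).symm.comp measurable_id measurable_expRamp

variable [IsProbabilityMeasure μ]

lemma mgf_le_exp_sq_mul_integral_sq {X : Ω → ℝ} {θ : ℝ} (hX : MemLp X 2 μ)
    (hle : ∀ᵐ ω ∂μ, X ω ≤ 1) (hmean : ∫ ω, X ω ∂μ ≤ 0) (hθ0 : 0 ≤ θ) (hθ1 : θ ≤ 1) :
    mgf X μ θ ≤ exp (θ ^ 2 * ∫ ω, X ω ^ 2 ∂μ) := by
  have hlin : Integrable (fun ω ↦ 1 + θ * X ω) μ :=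
    (integrable_const 1).add ((hX.integrable one_le_two).const_mul θ)
  have hsq : Integrable (fun ω ↦ θ ^ 2 * X ω ^ 2) μ := hX.integrable_sq.const_mul _
  calc mgf X μ θ ≤ ∫ ω, (1 + θ * X ω + θ ^ 2 * X ω ^ 2) ∂μ := by
        refine integral_mono_ae
          (integrable_exp_mul_of_le θ 1 hθ0 hX.aemeasurable hle) (hlin.add hsq) ?_
        filter_upwards [hle] with ω hω
        simpa only [mul_pow] using
          exp_le_one_add_self_add_sq ((mul_le_of_le_one_right hθ0 hω).trans hθ1)
    _ = 1 + θ * (∫ ω, X ω ∂μ) + θ ^ 2 * ∫ ω, X ω ^ 2 ∂μ := by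
        rw [integral_add hlin hsq, integral_add (integrable_const 1)
          ((hX.integrable one_le_two).const_mul θ), integral_const_mul, integral_const_mul]
        simp
    _ ≤ θ ^ 2 * (∫ ω, X ω ^ 2 ∂μ) + 1 := by
        linarith [mul_nonpos_of_nonneg_of_nonpos hθ0 hmean]
    _ ≤ exp (θ ^ 2 * ∫ ω, X ω ^ 2 ∂μ) := add_one_le_exp _

lemma integrable_exp_mul_sum (hmeas : ∀ i, Measurable (Y i)) (hindep : iIndepFun Y μ)
    (hle : ∀ i, ∀ᵐ ω ∂μ, Y i ω ≤ 1) {θ : ℝ} (hθ : 0 ≤ θ) :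
    Integrable (fun ω ↦ exp (θ * (∑ i ∈ s, Y i) ω)) μ :=
  hindep.integrable_exp_mul_sum hmeas fun i _ ↦
    integrable_exp_mul_of_le θ 1 hθ (hmeas i).aemeasurable (hle i)

lemma integrable_exp_sum (hmeas : ∀ i, Measurable (Y i)) (hindep : iIndepFun Y μ)
    (hle : ∀ i, ∀ᵐ ω ∂μ, Y i ω ≤ 1) : Integrable (fun ω ↦ exp ((∑ i ∈ s, Y i) ω)) μ := by
  simpa only [one_mul] using integrable_exp_mul_sum (s := s) hmeas hindep hle zero_le_one

lemma integrable_expRamp_sum (hmeas : ∀ i, Measurable (Y i)) (hindep : iIndepFun Y μ)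
    (hle : ∀ i, ∀ᵐ ω ∂μ, Y i ω ≤ 1) (hL : 0 ≤ L) :
    Integrable (fun ω ↦ expRamp c L ((∑ i ∈ s, Y i) ω)) μ := by
  refine ((integrable_exp_mul_sum (s := s) hmeas hindep hle one_half_pos.le).const_mul L).mono'
    (measurable_expRamp.comp (measurable_finsetSum hmeas)).aestronglyMeasurable
    (ae_of_all _ fun ω ↦ ?_)
  rw [norm_of_nonneg (expRamp_nonneg _), one_div_mul_eq_div]
  exact expRamp_le hL _

lemma integrable_mul_expRamp_sum (hmeas : ∀ i, Measurable (Y i)) (hindep : iIndepFun Y μ)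
    (hL2 : ∀ i, MemLp (Y i) 2 μ) (hle : ∀ i, ∀ᵐ ω ∂μ, Y i ω ≤ 1) (hj : j ∉ s) (hL : 0 ≤ L) :
    Integrable (fun ω ↦ Y j ω * expRamp c L ((∑ i ∈ s, Y i) ω)) μ :=
  (indepFun_expRamp_sum hmeas hindep hj).integrable_mul ((hL2 j).integrable one_le_two)
    (integrable_expRamp_sum hmeas hindep hle hL)

lemma integral_clippedSq_le {X : Ω → ℝ} (hX : MemLp X 2 μ) (hα : 0 ≤ α)
    (hvar : ∫ ω, X ω ^ 2 ∂μ ≤ 1) : ∫ ω, clippedSq α (X ω) ∂μ ≤ α := by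
  have habs : ∫ ω, |X ω| ∂μ ≤ ∫ ω, (1 + X ω ^ 2) / 2 ∂μ :=
    integral_mono (hX.integrable one_le_two).abs
      (((integrable_const 1).add hX.integrable_sq).div_const 2) fun ω ↦ by
        have := two_mul_le_add_sq 1 |X ω|
        rw [sq_abs] at this
        simp only
        linarith
  rw [integral_div, integral_add (integrable_const 1) hX.integrable_sq, integral_const,
    probReal_univ, one_smul] at habs
  calc ∫ ω, clippedSq α (X ω) ∂μ ≤ ∫ ω, α * |X ω| ∂μ :=
        integral_mono (integrable_clippedSq hX hα)
          ((hX.integrable one_le_two).abs.const_mul α) fun ω ↦ clippedSq_le α (X ω)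
    _ = α * ∫ ω, |X ω| ∂μ := integral_const_mul _ _
    _ ≤ α := mul_le_of_le_one_right hα (by linarith)

lemma variance_clippedSq_le {X : Ω → ℝ} (hX : MemLp X 2 μ) (hα : 0 ≤ α) :
    Var[fun ω ↦ clippedSq α (X ω); μ] ≤ α ^ 2 * ∫ ω, X ω ^ 2 ∂μ := by
  have hclip := memLp_clippedSq hX hα
  refine (variance_le_expectation_sq hclip.aestronglyMeasurable).trans ?_
  rw [← integral_const_mul]
  refine integral_mono hclip.integrable_sq (hX.integrable_sq.const_mul _) fun ω ↦ ?_
  rw [← sq_abs (X ω), ← mul_pow]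
  exact pow_le_pow_left₀ (clippedSq_nonneg hα _) (clippedSq_le α _) 2

lemma variance_sum_clippedSq_le (hindep : iIndepFun Y μ) (hL2 : ∀ i, MemLp (Y i) 2 μ)
    (hvar : ∑ i ∈ s, ∫ ω, Y i ω ^ 2 ∂μ ≤ 1) (hα : 0 ≤ α) :
    Var[∑ i ∈ s, fun ω ↦ clippedSq α (Y i ω); μ] ≤ α ^ 2 := by
  have hclip : iIndepFun (fun i ω ↦ clippedSq α (Y i ω)) μ :=
    hindep.comp (fun _ ↦ clippedSq α) fun _ ↦ measurable_clippedSq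
  rw [IndepFun.variance_sum (fun i _ ↦ memLp_clippedSq (hL2 i) hα)
    fun i _ j _ hij ↦ hclip.indepFun hij]
  calc ∑ i ∈ s, Var[fun ω ↦ clippedSq α (Y i ω); μ]
      ≤ ∑ i ∈ s, α ^ 2 * ∫ ω, Y i ω ^ 2 ∂μ :=
        Finset.sum_le_sum fun i _ ↦ variance_clippedSq_le (hL2 i) hα
    _ ≤ α ^ 2 := by
        rw [← Finset.mul_sum]
        exact mul_le_of_le_one_right (sq_nonneg α) hvar

variable (hmeas : ∀ i, Measurable (Y i)) (hindep : iIndepFun Y μ) (hL2 : ∀ i, MemLp (Y i) 2 μ)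
  (hle : ∀ i, ∀ᵐ ω ∂μ, Y i ω ≤ 1) (hmean : ∀ i, ∫ ω, Y i ω ∂μ ≤ 0)
  (hvar : ∑ i ∈ s, ∫ ω, Y i ω ^ 2 ∂μ ≤ 1)

include hmeas hindep hL2 hle hmean hvar

lemma mgf_sum_le_exp_sq {θ : ℝ} (hθ0 : 0 ≤ θ) (hθ1 : θ ≤ 1) :
    mgf (∑ i ∈ s, Y i) μ θ ≤ exp (θ ^ 2) :=
  calc mgf (∑ i ∈ s, Y i) μ θ = ∏ i ∈ s, mgf (Y i) μ θ := hindep.mgf_sum hmeas s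
    _ ≤ ∏ i ∈ s, exp (θ ^ 2 * ∫ ω, Y i ω ^ 2 ∂μ) :=
        Finset.prod_le_prod (fun _ _ ↦ mgf_nonneg) fun i _ ↦
          mgf_le_exp_sq_mul_integral_sq (hL2 i) (hle i) (hmean i) hθ0 hθ1
    _ = exp (θ ^ 2 * ∑ i ∈ s, ∫ ω, Y i ω ^ 2 ∂μ) := by rw [← exp_sum, Finset.mul_sum]
    _ ≤ exp (θ ^ 2) := exp_le_exp.2 (mul_le_of_le_one_right (sq_nonneg θ) hvar)

lemma integral_exp_sum_le : ∫ ω, exp ((∑ i ∈ s, Y i) ω) ∂μ ≤ exp 1 := by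
  simpa only [mgf, one_mul, one_pow] using
    mgf_sum_le_exp_sq hmeas hindep hL2 hle hmean hvar zero_le_one le_rfl

lemma measureReal_sum_mem_Icc_le_exp (a b : ℝ) :
    μ.real ((∑ i ∈ s, Y i) ⁻¹' Set.Icc a b) ≤ exp (-a / 2) * exp (1 / 4) :=
  calc μ.real ((∑ i ∈ s, Y i) ⁻¹' Set.Icc a b) ≤ μ.real {ω | a ≤ (∑ i ∈ s, Y i) ω} :=
        measureReal_mono fun _ hω ↦ hω.1
    _ ≤ exp (-(1 / 2) * a) * mgf (∑ i ∈ s, Y i) μ (1 / 2) :=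
        measure_ge_le_exp_mul_mgf a one_half_pos.le
          (integrable_exp_mul_sum hmeas hindep hle one_half_pos.le)
    _ ≤ exp (-(1 / 2) * a) * exp ((1 / 2) ^ 2) := by
        gcongr
        exact mgf_sum_le_exp_sq hmeas hindep hL2 hle hmean hvar one_half_pos.le one_half_lt_one.le
    _ = exp (-a / 2) * exp (1 / 4) := by congr 2 <;> ring

lemma integral_expRamp_sum_le (hL : 0 ≤ L) :
    ∫ ω, expRamp c L ((∑ i ∈ s, Y i) ω) ∂μ ≤ L * exp (1 / 4) :=
  calc ∫ ω, expRamp c L ((∑ i ∈ s, Y i) ω) ∂μ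
      ≤ ∫ ω, L * exp (1 / 2 * (∑ i ∈ s, Y i) ω) ∂μ :=
        integral_mono (integrable_expRamp_sum hmeas hindep hle hL)
          ((integrable_exp_mul_sum hmeas hindep hle one_half_pos.le).const_mul L) fun ω ↦ by
            simpa only [one_div_mul_eq_div] using expRamp_le hL _
    _ = L * mgf (∑ i ∈ s, Y i) μ (1 / 2) := integral_const_mul _ _
    _ ≤ L * exp ((1 / 2) ^ 2) := by
        gcongr
        exact mgf_sum_le_exp_sq hmeas hindep hL2 hle hmean hvar one_half_pos.le one_half_lt_one.le
    _ = L * exp (1 / 4) := by norm_num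

lemma integral_mul_le_integral_mul_expRamp_sum (hj : j ∉ s) (hL : 0 ≤ L) :
    (∫ ω, Y j ω ∂μ) * (L * exp (1 / 4)) ≤
      ∫ ω, Y j ω * expRamp c L ((∑ i ∈ s, Y i) ω) ∂μ := by
  rw [(indepFun_expRamp_sum hmeas hindep hj).integral_fun_mul_eq_mul_integral
    (hmeas j).aestronglyMeasurable
    (integrable_expRamp_sum hmeas hindep hle hL).aestronglyMeasurable]
  exact mul_le_mul_of_nonpos_left (integral_expRamp_sum_le hmeas hindep hL2 hle hmean hvar hL)
    (hmean j)

lemma exp_half_mul_setIntegral_sum_clippedSq_le (hab : a ≤ b) (hα : 0 ≤ α) :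
    exp (a / 2) * ∫ ω in (∑ i ∈ s, Y i) ⁻¹' Set.Icc a b,
        (∑ i ∈ s, fun ω ↦ clippedSq α (Y i ω)) ω ∂μ ≤
      (b - a + 2 * α) * (2 + exp (1 / 4) * -∑ i ∈ s, ∫ ω, Y i ω ∂μ) := by
  classical
  set L := b - a + 2 * α
  have hL : 0 ≤ L := by linarith
  set A := (∑ i ∈ s, Y i) ⁻¹' Set.Icc a b
  set S := ∑ i ∈ s, fun ω ↦ clippedSq α (Y i ω)
  have hA : MeasurableSet A := measurable_finsetSum hmeas measurableSet_Icc
  have hS : Integrable (fun ω ↦ exp (a / 2) * S ω) μ :=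
    (integrable_finsetSum' s fun i _ ↦ integrable_clippedSq (hL2 i) hα).const_mul _
  have hexp := integrable_exp_sum (s := s) hmeas hindep hle
  have hleaveOut (j : ι) :
      Integrable (fun ω ↦ Y j ω * expRamp (a - α) L ((∑ i ∈ s.erase j, Y i) ω)) μ :=
    integrable_mul_expRamp_sum hmeas hindep hL2 hle (s.notMem_erase j) hL
  have hsum := integrable_finsetSum s fun j _ ↦ hleaveOut j
  have integrated : exp (a / 2) * (∫ ω in A, S ω ∂μ)
      + ∑ j ∈ s, ∫ ω, Y j ω * expRamp (a - α) L ((∑ i ∈ s.erase j, Y i) ω) ∂μ ≤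
      2 * L * exp (-1) * ∫ ω, exp ((∑ i ∈ s, Y i) ω) ∂μ := by
    have h := integral_mono (μ := μ) ((hS.indicator hA).add hsum)
      (hexp.const_mul (2 * L * exp (-1))) (indicator_exp_mul_sum_clippedSq_add_le hab hα)
    rwa [integral_add' (hS.indicator hA) hsum, integral_indicator hA, integral_const_mul,
      integral_finsetSum s fun j _ ↦ hleaveOut j, integral_const_mul] at h
  have leave_one_out : (∑ j ∈ s, ∫ ω, Y j ω ∂μ) * (L * exp (1 / 4)) ≤
      ∑ j ∈ s, ∫ ω, Y j ω * expRamp (a - α) L ((∑ i ∈ s.erase j, Y i) ω) ∂μ := by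
    rw [Finset.sum_mul]
    refine Finset.sum_le_sum fun j _ ↦ ?_
    refine integral_mul_le_integral_mul_expRamp_sum hmeas hindep hL2 hle hmean ?_
      (s.notMem_erase j) hL
    exact (Finset.sum_le_sum_of_subset_of_nonneg (s.erase_subset j) fun i _ _ ↦
      integral_nonneg fun ω ↦ sq_nonneg _).trans hvar
  have exp_moment : 2 * L * exp (-1) * ∫ ω, exp ((∑ i ∈ s, Y i) ω) ∂μ ≤ 2 * L := by
    calc 2 * L * exp (-1) * ∫ ω, exp ((∑ i ∈ s, Y i) ω) ∂μ ≤ 2 * L * exp (-1) * exp 1 := by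
          gcongr
          exact integral_exp_sum_le hmeas hindep hL2 hle hmean hvar
      _ = 2 * L := by rw [mul_assoc, ← exp_add, neg_add_cancel, exp_zero, mul_one]
  linarith

lemma exp_half_mul_sum_clippedSq_mul_measureReal_le (hab : a ≤ b) (hα : 0 < α) :
    exp (a / 2) * ((∑ i ∈ s, ∫ ω, clippedSq α (Y i ω) ∂μ) *
        μ.real ((∑ i ∈ s, Y i) ⁻¹' Set.Icc a b)) ≤
      (b - a + 2 * α) * (2 + exp (1 / 4) * -∑ i ∈ s, ∫ ω, Y i ω ∂μ) + α * (exp 1 + 1) / 2 := by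
  have hA : MeasurableSet ((∑ i ∈ s, Y i) ⁻¹' Set.Icc a b) :=
    measurable_finsetSum hmeas measurableSet_Icc
  have hS : MemLp (∑ i ∈ s, fun ω ↦ clippedSq α (Y i ω)) 2 μ :=
    memLp_finsetSum' s fun i _ ↦ memLp_clippedSq (hL2 i) hα.le
  have hES : ∫ ω, (∑ i ∈ s, fun ω ↦ clippedSq α (Y i ω)) ω ∂μ =
      ∑ i ∈ s, ∫ ω, clippedSq α (Y i ω) ∂μ := by
    simp only [Finset.sum_apply]
    exact integral_finsetSum s fun i _ ↦ integrable_clippedSq (hL2 i) hα.le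
  have fluctuation : (α * ∫ ω, exp ((∑ i ∈ s, Y i) ω) ∂μ
      + α⁻¹ * Var[∑ i ∈ s, fun ω ↦ clippedSq α (Y i ω); μ]) / 2 ≤ α * (exp 1 + 1) / 2 :=
    calc _ ≤ (α * exp 1 + α⁻¹ * α ^ 2) / 2 := by
          gcongr
          · exact integral_exp_sum_le hmeas hindep hL2 hle hmean hvar
          · exact variance_sum_clippedSq_le hindep hL2 hvar hα.le
      _ = α * (exp 1 + 1) / 2 := by field_simp
  rw [← hES]
  linarith [exp_half_mul_integral_mul_measureReal_le hA (fun _ hω ↦ hω.1)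
      (integrable_exp_sum hmeas hindep hle) hS hα,
    exp_half_mul_setIntegral_sum_clippedSq_le (s := s) hmeas hindep hL2 hle hmean hvar hab hα.le]

theorem measureReal_sum_mem_Icc_le (hab : a ≤ b) {δ : ℝ} (hδ : 0 < δ)
    (hmean_ge : -∑ i ∈ s, ∫ ω, Y i ω ∂μ ≤ δ)
    (hclip : 3 / 4 - 2 * δ ≤ ∑ i ∈ s, ∫ ω, clippedSq δ (Y i ω) ∂μ) :
    μ.real ((∑ i ∈ s, Y i) ⁻¹' Set.Icc a b) ≤ exp (-a / 2) * (5 * min 1 (b - a) + 20 * δ) := by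
  have exp_quarter : exp (1 / 4) ≤ 21 / 16 :=
    (exp_le_one_add_self_add_sq (by norm_num)).trans (by norm_num)
  rcases le_or_gt (21 / 16) (5 * min 1 (b - a) + 20 * δ) with hlarge | hsmall
  · refine (measureReal_sum_mem_Icc_le_exp hmeas hindep hL2 hle hmean hvar a b).trans ?_
    gcongr
    exact exp_quarter.trans hlarge
  have hδ' : δ < 3 / 40 := by linarith [le_min zero_le_one (sub_nonneg.2 hab)]
  have hmin : min 1 (b - a) = b - a :=
    min_eq_right (by by_contra! h; rw [min_eq_left h.le] at hsmall; linarith)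
  set P := μ.real ((∑ i ∈ s, Y i) ⁻¹' Set.Icc a b)
  have hP : exp (a / 2) * (3 / 5 * P) ≤ (b - a + 2 * δ) * (21 / 10) + δ * 2 :=
    calc exp (a / 2) * (3 / 5 * P)
        ≤ exp (a / 2) * ((∑ i ∈ s, ∫ ω, clippedSq δ (Y i ω) ∂μ) * P) := by
          gcongr
          linarith
      _ ≤ _ := exp_half_mul_sum_clippedSq_mul_measureReal_le hmeas hindep hL2 hle hmean hvar hab hδ
      _ ≤ (b - a + 2 * δ) * (2 + 21 / 16 * (3 / 40)) + δ * (3 + 1) / 2 := by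
          gcongr
          · exact neg_nonneg.2 (Finset.sum_nonpos fun i _ ↦ hmean i)
          · linarith
          · linarith [exp_one_lt_d9]
      _ ≤ (b - a + 2 * δ) * (21 / 10) + δ * 2 := by linarith
  rw [hmin, neg_div, exp_neg, ← div_eq_inv_mul, le_div_iff₀' (exp_pos _)]
  linarith

end Concentration

/-- The one-sided truncation of `x` at level one, so that `xbar ξ i ω` is
`upperTrunc (ξ i ω)`. -/
noncomputable def upperTrunc (x : ℝ) : ℝ := if x ≤ 1 then x else 0

/-- The square of `x` restricted to `1 < |x|`; its expectations sum up to `beta2`. -/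
noncomputable def tailSq (x : ℝ) : ℝ := if 1 < |x| then x ^ 2 else 0

/-- The absolute cube of `x` restricted to `|x| ≤ 1`; its expectations sum up to `beta3`. -/
noncomputable def bodyCube (x : ℝ) : ℝ := if |x| ≤ 1 then |x| ^ 3 else 0

section Truncation

lemma measurable_upperTrunc : Measurable upperTrunc :=
  Measurable.ite measurableSet_Iic measurable_id measurable_const

lemma measurable_tailSq : Measurable tailSq :=
  Measurable.ite (measurableSet_lt measurable_const measurable_id.abs) (by fun_prop)
    measurable_const

lemma measurable_bodyCube : Measurable bodyCube :=
  Measurable.ite (measurableSet_le measurable_id.abs measurable_const) (by fun_prop)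
    measurable_const

lemma upperTrunc_le_one (x : ℝ) : upperTrunc x ≤ 1 := by unfold upperTrunc; split_ifs <;> linarith

lemma upperTrunc_le_self (x : ℝ) : upperTrunc x ≤ x := by unfold upperTrunc; split_ifs <;> linarith

lemma abs_upperTrunc_le (x : ℝ) : |upperTrunc x| ≤ |x| := by unfold upperTrunc; split_ifs <;> simp

lemma upperTrunc_of_abs_le_one {x : ℝ} (hx : |x| ≤ 1) : upperTrunc x = x :=
  if_pos (le_of_abs_le hx)

lemma tailSq_of_abs_le_one {x : ℝ} (hx : |x| ≤ 1) : tailSq x = 0 := if_neg hx.not_gt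

lemma tailSq_of_one_lt_abs {x : ℝ} (hx : 1 < |x|) : tailSq x = x ^ 2 := if_pos hx

lemma bodyCube_of_abs_le_one {x : ℝ} (hx : |x| ≤ 1) : bodyCube x = |x| ^ 3 := if_pos hx

lemma bodyCube_of_one_lt_abs {x : ℝ} (hx : 1 < |x|) : bodyCube x = 0 := if_neg hx.not_ge

lemma tailSq_nonneg (x : ℝ) : 0 ≤ tailSq x := by unfold tailSq; positivity

lemma bodyCube_nonneg (x : ℝ) : 0 ≤ bodyCube x := by unfold bodyCube; positivity

lemma tailSq_add_bodyCube_le_sq (x : ℝ) : tailSq x + bodyCube x ≤ x ^ 2 := by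
  rcases le_or_gt |x| 1 with hx | hx
  · rw [tailSq_of_abs_le_one hx, bodyCube_of_abs_le_one hx, zero_add, ← sq_abs x]
    exact pow_le_pow_of_le_one (abs_nonneg x) hx (by norm_num)
  · rw [tailSq_of_one_lt_abs hx, bodyCube_of_one_lt_abs hx, add_zero]

lemma tailSq_add_bodyCube_eq_zero_iff {x : ℝ} : tailSq x + bodyCube x = 0 ↔ x = 0 := by
  rcases le_or_gt |x| 1 with hx | hx
  · simp [tailSq_of_abs_le_one hx, bodyCube_of_abs_le_one hx]
  · simp [tailSq_of_one_lt_abs hx, bodyCube_of_one_lt_abs hx]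

lemma neg_upperTrunc_le (x : ℝ) : -upperTrunc x ≤ -x + tailSq x := by
  rcases le_or_gt x 1 with hx | hx
  · rw [upperTrunc, if_pos hx]
    linarith [tailSq_nonneg x]
  · rw [upperTrunc, if_neg hx.not_ge, tailSq_of_one_lt_abs (hx.trans_le (le_abs_self x))]
    nlinarith

lemma sq_sub_cube_div_le_clippedSq {α : ℝ} (hα : 0 < α) (x : ℝ) :
    x ^ 2 - |x| ^ 3 / (4 * α) ≤ clippedSq α x := by
  rw [clippedSq, ← sq_abs x]
  rcases le_total α |x| with hx | hx
  · have amgm : |x| * α - (|x| ^ 2 - |x| ^ 3 / (4 * α)) = |x| * (|x| - 2 * α) ^ 2 / (4 * α) := by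
      field_simp
      ring
    have : 0 ≤ |x| * (|x| - 2 * α) ^ 2 / (4 * α) := by positivity
    rw [min_eq_left hx]
    linarith
  · have : 0 ≤ |x| ^ 3 / (4 * α) := by positivity
    rw [min_eq_right hx]
    linarith

lemma sq_sub_tailSq_sub_bodyCube_div_le_clippedSq {α : ℝ} (hα : 0 < α) (x : ℝ) :
    x ^ 2 - tailSq x - bodyCube x / (4 * α) ≤ clippedSq α (upperTrunc x) := by
  rcases le_or_gt |x| 1 with hx | hx
  · rw [upperTrunc_of_abs_le_one hx, tailSq_of_abs_le_one hx, bodyCube_of_abs_le_one hx, sub_zero]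
    exact sq_sub_cube_div_le_clippedSq hα x
  · rw [tailSq_of_one_lt_abs hx, bodyCube_of_one_lt_abs hx, sub_self, zero_div, sub_zero]
    exact clippedSq_nonneg hα.le _

lemma min_one_abs_mul_upperTrunc_sq_le (x : ℝ) :
    min 1 |upperTrunc x| * upperTrunc x ^ 2 ≤ tailSq x + bodyCube x := by
  rcases le_or_gt |x| 1 with hx | hx
  · rw [upperTrunc_of_abs_le_one hx, tailSq_of_abs_le_one hx, bodyCube_of_abs_le_one hx,
      min_eq_right hx, ← sq_abs x]
    exact le_of_eq (by ring)
  · rw [tailSq_of_one_lt_abs hx, bodyCube_of_one_lt_abs hx, add_zero]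
    exact (mul_le_of_le_one_left (sq_nonneg _) (min_le_left _ _)).trans
      (sq_le_sq.2 (abs_upperTrunc_le x))

variable {Ω : Type*} [MeasurableSpace Ω] {μ : Measure Ω} {X : Ω → ℝ}

lemma memLp_upperTrunc (hX : MemLp X 2 μ) : MemLp (fun ω ↦ upperTrunc (X ω)) 2 μ :=
  hX.of_le (measurable_upperTrunc.comp_aemeasurable hX.aemeasurable).aestronglyMeasurable
    (ae_of_all _ fun _ ↦ abs_upperTrunc_le _)

lemma integrable_tailSq (hX : MemLp X 2 μ) : Integrable (fun ω ↦ tailSq (X ω)) μ := by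
  refine hX.integrable_sq.mono'
    (measurable_tailSq.comp_aemeasurable hX.aemeasurable).aestronglyMeasurable
    (ae_of_all _ fun ω ↦ ?_)
  rw [norm_of_nonneg (tailSq_nonneg _)]
  linarith [tailSq_add_bodyCube_le_sq (X ω), bodyCube_nonneg (X ω)]

lemma integrable_bodyCube (hX : MemLp X 2 μ) : Integrable (fun ω ↦ bodyCube (X ω)) μ := by
  refine hX.integrable_sq.mono'
    (measurable_bodyCube.comp_aemeasurable hX.aemeasurable).aestronglyMeasurable
    (ae_of_all _ fun ω ↦ ?_)
  rw [norm_of_nonneg (bodyCube_nonneg _)]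
  linarith [tailSq_add_bodyCube_le_sq (X ω), tailSq_nonneg (X ω)]

lemma integral_upperTrunc_sq_le (hX : MemLp X 2 μ) :
    ∫ ω, upperTrunc (X ω) ^ 2 ∂μ ≤ ∫ ω, X ω ^ 2 ∂μ :=
  integral_mono (memLp_upperTrunc hX).integrable_sq hX.integrable_sq fun _ ↦
    sq_le_sq.2 (abs_upperTrunc_le _)

lemma integral_min_one_abs_mul_upperTrunc_sq_le (hX : MemLp X 2 μ) :
    ∫ ω, min 1 |upperTrunc (X ω)| * upperTrunc (X ω) ^ 2 ∂μ ≤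
      (∫ ω, tailSq (X ω) ∂μ) + ∫ ω, bodyCube (X ω) ∂μ := by
  rw [← integral_add (integrable_tailSq hX) (integrable_bodyCube hX)]
  exact integral_mono_of_nonneg
    (ae_of_all _ fun ω ↦ mul_nonneg (min_one_abs_nonneg _) (sq_nonneg _))
    ((integrable_tailSq hX).add (integrable_bodyCube hX))
    (ae_of_all _ fun ω ↦ min_one_abs_mul_upperTrunc_sq_le (X ω))

lemma integral_sq_eq_zero_of_integral_tailSq_add_bodyCube (hX : MemLp X 2 μ)
    (h : (∫ ω, tailSq (X ω) ∂μ) + ∫ ω, bodyCube (X ω) ∂μ = 0) : ∫ ω, X ω ^ 2 ∂μ = 0 := by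
  rw [← integral_add (integrable_tailSq hX) (integrable_bodyCube hX), integral_eq_zero_iff_of_nonneg
    (fun ω ↦ add_nonneg (tailSq_nonneg _) (bodyCube_nonneg _))
    ((integrable_tailSq hX).add (integrable_bodyCube hX))] at h
  refine integral_eq_zero_of_ae (h.mono fun ω hω ↦ ?_)
  have hXω : X ω = 0 := tailSq_add_bodyCube_eq_zero_iff.1 hω
  simp [hXω]

variable [IsFiniteMeasure μ]

lemma integral_upperTrunc_nonpos (hX : MemLp X 2 μ) (hmean : ∫ ω, X ω ∂μ = 0) :
    ∫ ω, upperTrunc (X ω) ∂μ ≤ 0 :=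
  hmean ▸ integral_mono ((memLp_upperTrunc hX).integrable one_le_two) (hX.integrable one_le_two)
    fun _ ↦ upperTrunc_le_self _

lemma neg_integral_upperTrunc_le (hX : MemLp X 2 μ) (hmean : ∫ ω, X ω ∂μ = 0) :
    -∫ ω, upperTrunc (X ω) ∂μ ≤ ∫ ω, tailSq (X ω) ∂μ := by
  have hX1 := hX.integrable one_le_two
  calc -∫ ω, upperTrunc (X ω) ∂μ = ∫ ω, -upperTrunc (X ω) ∂μ := (integral_neg _).symm
    _ ≤ ∫ ω, (-X ω + tailSq (X ω)) ∂μ :=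
        integral_mono ((memLp_upperTrunc hX).integrable one_le_two).neg
          (hX1.neg.add (integrable_tailSq hX)) fun _ ↦ neg_upperTrunc_le _
    _ = ∫ ω, tailSq (X ω) ∂μ := by
        rw [integral_add hX1.fun_neg (integrable_tailSq hX), integral_neg, hmean, neg_zero,
          zero_add]

lemma integral_sq_sub_le_integral_clippedSq_upperTrunc {α : ℝ} (hα : 0 < α) (hX : MemLp X 2 μ) :
    ∫ ω, X ω ^ 2 ∂μ - ∫ ω, tailSq (X ω) ∂μ - (∫ ω, bodyCube (X ω) ∂μ) / (4 * α) ≤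
      ∫ ω, clippedSq α (upperTrunc (X ω)) ∂μ := by
  have htail : Integrable (fun ω ↦ X ω ^ 2 - tailSq (X ω)) μ :=
    hX.integrable_sq.sub (integrable_tailSq hX)
  have hbody := (integrable_bodyCube hX).div_const (4 * α)
  rw [← integral_sub hX.integrable_sq (integrable_tailSq hX), ← integral_div,
    ← integral_sub htail hbody]
  exact integral_mono (htail.sub hbody)
    (integrable_clippedSq (memLp_upperTrunc hX) hα.le)
    fun ω ↦ sq_sub_tailSq_sub_bodyCube_div_le_clippedSq hα (X ω)

end Truncation

/-- The integrand of the kernels `Kbar`: the weight `|x|` on the segment between `0` and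
`x`, so that `Kbar ξ i t` is the expectation of `steinKernel (xbar ξ i) t`. -/
noncomputable def steinKernel (x t : ℝ) : ℝ :=
  x * ((if 0 ≤ t ∧ t ≤ x then (1 : ℝ) else 0) - (if x ≤ t ∧ t < 0 then (1 : ℝ) else 0))

section SteinKernel

lemma measurable_uncurry_steinKernel : Measurable (Function.uncurry steinKernel) := by
  refine measurable_fst.mul (.sub (.ite ?_ measurable_const measurable_const)
    (.ite ?_ measurable_const measurable_const))
  · exact (measurableSet_le measurable_const measurable_snd).inter
      (measurableSet_le measurable_snd measurable_fst)
  · exact (measurableSet_le measurable_fst measurable_snd).inter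
      (measurableSet_lt measurable_snd measurable_const)

lemma steinKernel_of_notMem_uIcc {x t : ℝ} (ht : t ∉ Set.uIcc 0 x) : steinKernel x t = 0 := by
  rw [Set.mem_uIcc, not_or] at ht
  rw [steinKernel, if_neg ht.1, if_neg fun h ↦ ht.2 ⟨h.1, h.2.le⟩, sub_self, mul_zero]

lemma abs_steinKernel_le (x t : ℝ) : |steinKernel x t| ≤ |x| := by
  rw [steinKernel, abs_mul]
  refine mul_le_of_le_one_right (abs_nonneg x) ?_
  split_ifs <;> simp

lemma lintegral_mul_enorm_steinKernel_le {g : ℝ → ℝ} (hg : Monotone g) (hg0 : 0 ≤ g 0) (x : ℝ) :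
    ∫⁻ t, ENNReal.ofReal (g |t|) * ‖steinKernel x t‖ₑ ≤ ENNReal.ofReal (g |x| * x ^ 2) := by
  have hgx : 0 ≤ g |x| := hg0.trans (hg (abs_nonneg x))
  calc ∫⁻ t, ENNReal.ofReal (g |t|) * ‖steinKernel x t‖ₑ
      ≤ ∫⁻ t, (Set.uIcc 0 x).indicator (fun _ ↦ ENNReal.ofReal (g |x| * |x|)) t := by
        refine lintegral_mono fun t ↦ ?_
        by_cases ht : t ∈ Set.uIcc 0 x
        · have htx : |t| ≤ |x| := by simpa using Set.abs_sub_left_of_mem_uIcc ht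
          rw [Set.indicator_of_mem ht, ENNReal.ofReal_mul hgx, ← ofReal_norm]
          gcongr
          · exact hg htx
          · exact abs_steinKernel_le x t
        · simp [steinKernel_of_notMem_uIcc ht]
    _ = ENNReal.ofReal (g |x| * |x|) * ENNReal.ofReal |x| := by
        rw [lintegral_indicator_const measurableSet_uIcc, Real.volume_interval, sub_zero]
    _ = ENNReal.ofReal (g |x| * x ^ 2) := by
        rw [← ENNReal.ofReal_mul (by positivity), mul_assoc, ← sq, sq_abs]

lemma abs_setIntegral_mul_integral_steinKernel_le {Ω : Type*} [MeasurableSpace Ω] {μ : Measure Ω}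
    [SFinite μ] {X : Ω → ℝ} (hX : Measurable X) {D g : ℝ → ℝ} {B : Set ℝ} (hB : MeasurableSet B)
    (hg : Monotone g) (hg0 : 0 ≤ g 0) (hD : ∀ t ∈ B, |D t| ≤ g |t|)
    (hint : Integrable (fun ω ↦ g |X ω| * X ω ^ 2) μ) :
    |∫ t in B, D t * ∫ ω, steinKernel (X ω) t ∂μ| ≤ ∫ ω, g |X ω| * X ω ^ 2 ∂μ := by
  have hnonneg (ω : Ω) : 0 ≤ g |X ω| * X ω ^ 2 :=
    mul_nonneg (hg0.trans (hg (abs_nonneg _))) (sq_nonneg _)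
  have hK : Measurable fun p : ℝ × Ω ↦ steinKernel (X p.2) p.1 :=
    measurable_uncurry_steinKernel.comp ((hX.comp measurable_snd).prodMk measurable_fst)
  have hgK : Measurable fun p : ℝ × Ω ↦ ENNReal.ofReal (g |p.1|) * ‖steinKernel (X p.2) p.1‖ₑ :=
    (hg.measurable.comp measurable_fst.abs).ennreal_ofReal.mul hK.enorm
  rw [← ENNReal.ofReal_le_ofReal_iff (integral_nonneg hnonneg), ← norm_eq_abs, ofReal_norm,
    ofReal_integral_eq_lintegral_ofReal hint (ae_of_all _ hnonneg)]
  calc ‖∫ t in B, D t * ∫ ω, steinKernel (X ω) t ∂μ‖ₑ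
      ≤ ∫⁻ t in B, ‖D t * ∫ ω, steinKernel (X ω) t ∂μ‖ₑ := enorm_integral_le_lintegral_enorm _
    _ ≤ ∫⁻ t in B, ∫⁻ ω, ENNReal.ofReal (g |t|) * ‖steinKernel (X ω) t‖ₑ ∂μ := by
        refine setLIntegral_mono' hB fun t ht ↦ ?_
        have hKt : Measurable fun ω ↦ steinKernel (X ω) t := hK.comp measurable_prodMk_left
        rw [enorm_mul, lintegral_const_mul _ hKt.enorm, ← ofReal_norm]
        gcongr
        · exact hD t ht
        · exact enorm_integral_le_lintegral_enorm _
    _ ≤ ∫⁻ t, ∫⁻ ω, ENNReal.ofReal (g |t|) * ‖steinKernel (X ω) t‖ₑ ∂μ :=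
        setLIntegral_le_lintegral _ _
    _ = ∫⁻ ω, (∫⁻ t, ENNReal.ofReal (g |t|) * ‖steinKernel (X ω) t‖ₑ) ∂μ :=
        lintegral_lintegral_swap hgK.aemeasurable
    _ ≤ ∫⁻ ω, ENNReal.ofReal (g |X ω| * X ω ^ 2) ∂μ :=
        lintegral_mono fun ω ↦ lintegral_mul_enorm_steinKernel_le hg hg0 (X ω)

end SteinKernel

section LeaveOneOut

variable {Ω : Type*} {n : ℕ} {ξ : Fin n → Ω → ℝ}

lemma Wbari_eq_sum_erase (i : Fin n) : Wbari ξ i = ∑ j ∈ Finset.univ.erase i, xbar ξ j := by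
  ext ω
  rw [Finset.sum_erase_eq_sub (Finset.mem_univ i), Pi.sub_apply, Finset.sum_apply]
  rfl

variable [MeasureSpace Ω]

lemma measurable_xbar (hmeas : ∀ i, Measurable (ξ i)) (i : Fin n) : Measurable (xbar ξ i) :=
  measurable_upperTrunc.comp (hmeas i)

lemma memLp_xbar (hL2 : ∀ i, MemLp (ξ i) 2) (i : Fin n) : MemLp (xbar ξ i) 2 :=
  memLp_upperTrunc (hL2 i)

lemma measurable_Wbari (hmeas : ∀ i, Measurable (ξ i)) (i : Fin n) : Measurable (Wbari ξ i) := by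
  rw [Wbari_eq_sum_erase]
  exact measurable_finsetSum (measurable_xbar hmeas)

lemma iIndepFun_xbar (hindep : iIndepFun ξ ℙ) : iIndepFun (xbar ξ) ℙ :=
  hindep.comp (fun _ ↦ upperTrunc) fun _ ↦ measurable_upperTrunc

lemma indepFun_xbar_Wbari (hmeas : ∀ i, Measurable (ξ i)) (hindep : iIndepFun ξ ℙ) (i : Fin n) :
    IndepFun (xbar ξ i) (Wbari ξ i) ℙ := by
  rw [Wbari_eq_sum_erase]
  exact ((iIndepFun_xbar hindep).indepFun_finsetSum_of_notMem (measurable_xbar hmeas)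
    (Finset.notMem_erase i _)).symm

lemma beta2_nonneg : 0 ≤ beta2 ξ :=
  Finset.sum_nonneg fun _ _ ↦ integral_nonneg fun _ ↦ tailSq_nonneg _

lemma beta3_nonneg : 0 ≤ beta3 ξ :=
  Finset.sum_nonneg fun _ _ ↦ integral_nonneg fun _ ↦ bodyCube_nonneg _

lemma beta2_add_beta3_eq_sum :
    beta2 ξ + beta3 ξ = ∑ i, ((∫ ω, tailSq (ξ i ω)) + ∫ ω, bodyCube (ξ i ω)) :=
  Finset.sum_add_distrib.symm

lemma beta2_add_beta3_pos (hL2 : ∀ i, MemLp (ξ i) 2) (hvar : ∑ i, ∫ ω, ξ i ω ^ 2 ≠ 0) :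
    0 < beta2 ξ + beta3 ξ := by
  refine (add_nonneg beta2_nonneg beta3_nonneg).lt_of_ne' fun hzero ↦ hvar ?_
  rw [beta2_add_beta3_eq_sum, Finset.sum_eq_zero_iff_of_nonneg fun i _ ↦ add_nonneg
    (integral_nonneg fun _ ↦ tailSq_nonneg _) (integral_nonneg fun _ ↦ bodyCube_nonneg _)] at hzero
  exact Finset.sum_eq_zero fun i hi ↦
    integral_sq_eq_zero_of_integral_tailSq_add_bodyCube (hL2 i) (hzero i hi)

lemma integral_xbar_sq_le (hL2 : ∀ i, MemLp (ξ i) 2) (i : Fin n) :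
    ∫ ω, xbar ξ i ω ^ 2 ≤ ∫ ω, ξ i ω ^ 2 :=
  integral_upperTrunc_sq_le (hL2 i)

lemma sum_integral_xbar_sq_le (hL2 : ∀ i, MemLp (ξ i) 2) (s : Finset (Fin n)) :
    ∑ i ∈ s, ∫ ω, xbar ξ i ω ^ 2 ≤ ∑ i, ∫ ω, ξ i ω ^ 2 :=
  (Finset.sum_le_sum fun i _ ↦ integral_xbar_sq_le hL2 i).trans <|
    Finset.sum_le_sum_of_subset_of_nonneg s.subset_univ fun _ _ _ ↦
      integral_nonneg fun _ ↦ sq_nonneg _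

variable [IsProbabilityMeasure (ℙ : Measure Ω)]

lemma neg_sum_integral_xbar_le_beta2 (hL2 : ∀ i, MemLp (ξ i) 2) (hmean : ∀ i, ∫ ω, ξ i ω = 0)
    (s : Finset (Fin n)) : -∑ i ∈ s, ∫ ω, xbar ξ i ω ≤ beta2 ξ := by
  rw [← Finset.sum_neg_distrib]
  calc ∑ i ∈ s, -∫ ω, xbar ξ i ω ≤ ∑ i ∈ s, ∫ ω, tailSq (ξ i ω) :=
        Finset.sum_le_sum fun i _ ↦ neg_integral_upperTrunc_le (hL2 i) (hmean i)
    _ ≤ ∑ i, ∫ ω, tailSq (ξ i ω) :=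
        Finset.sum_le_sum_of_subset_of_nonneg s.subset_univ fun i _ _ ↦
          integral_nonneg fun _ ↦ tailSq_nonneg _

lemma le_sum_integral_clippedSq_xbar (hL2 : ∀ i, MemLp (ξ i) 2) {α : ℝ} (hα : 0 < α) :
    ∑ i, (∫ ω, ξ i ω ^ 2) - beta2 ξ - beta3 ξ / (4 * α) ≤ ∑ i, ∫ ω, clippedSq α (xbar ξ i ω) :=
  calc ∑ i, (∫ ω, ξ i ω ^ 2) - beta2 ξ - beta3 ξ / (4 * α)
      = ∑ i, ((∫ ω, ξ i ω ^ 2) - (∫ ω, tailSq (ξ i ω)) - (∫ ω, bodyCube (ξ i ω)) / (4 * α)) := by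
        rw [Finset.sum_sub_distrib, Finset.sum_sub_distrib, ← Finset.sum_div]
        rfl
    _ ≤ _ := Finset.sum_le_sum fun i _ ↦
        integral_sq_sub_le_integral_clippedSq_upperTrunc hα (hL2 i)

lemma le_sum_erase_integral_clippedSq_xbar (hL2 : ∀ i, MemLp (ξ i) 2)
    (hvar : ∑ i, ∫ ω, ξ i ω ^ 2 = 1) (i : Fin n) :
    3 / 4 - 2 * (beta2 ξ + beta3 ξ) ≤
      ∑ j ∈ Finset.univ.erase i, ∫ ω, clippedSq (beta2 ξ + beta3 ξ) (xbar ξ j ω) := by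
  have hδ := beta2_add_beta3_pos hL2 (hvar ▸ one_ne_zero)
  have hβ2 := beta2_nonneg (ξ := ξ)
  have hβ3 := beta3_nonneg (ξ := ξ)
  set δ := beta2 ξ + beta3 ξ
  have cube : beta3 ξ / (4 * δ) ≤ 1 / 4 := by
    rw [div_le_iff₀ (by positivity)]
    linarith
  have removed : ∫ ω, clippedSq δ (xbar ξ i ω) ≤ δ :=
    integral_clippedSq_le (memLp_xbar hL2 i) hδ.le (by
      simpa only [Finset.sum_singleton, hvar] using sum_integral_xbar_sq_le hL2 {i})
  rw [Finset.sum_erase_eq_sub (Finset.mem_univ i)]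
  linarith [le_sum_integral_clippedSq_xbar hL2 hδ]

variable (hmeas : ∀ i, Measurable (ξ i)) (hindep : iIndepFun ξ ℙ) (hL2 : ∀ i, MemLp (ξ i) 2)
  (hmean : ∀ i, ∫ ω, ξ i ω = 0) (hvar : ∑ i, ∫ ω, ξ i ω ^ 2 = 1)

include hmeas hindep hL2 hmean hvar

theorem measureReal_Wbari_mem_Icc_le (i : Fin n) {a b : ℝ} (hab : a ≤ b) :
    (ℙ : Measure Ω).real (Wbari ξ i ⁻¹' Set.Icc a b) ≤
      exp (-a / 2) * (5 * min 1 (b - a) + 20 * (beta2 ξ + beta3 ξ)) := by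
  rw [Wbari_eq_sum_erase]
  exact measureReal_sum_mem_Icc_le (measurable_xbar hmeas) (iIndepFun_xbar hindep)
    (memLp_xbar hL2) (fun j ↦ ae_of_all _ fun ω ↦ upperTrunc_le_one (ξ j ω))
    (fun j ↦ integral_upperTrunc_nonpos (hL2 j) (hmean j))
    ((sum_integral_xbar_sq_le hL2 _).trans_eq hvar) hab
    (beta2_add_beta3_pos hL2 (hvar ▸ one_ne_zero))
    ((neg_sum_integral_xbar_le_beta2 hL2 hmean _).trans (le_add_of_nonneg_right beta3_nonneg))
    (le_sum_erase_integral_clippedSq_xbar hL2 hvar i)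

lemma abs_integral_ite_Wbari_add_sub_le (i : Fin n) (z : ℝ) {x t : ℝ} (hx : x ≤ 1) (ht : t ≤ 1) :
    |∫ ω, ((if Wbari ξ i ω + x ≤ z then (1 : ℝ) else 0)
        - (if Wbari ξ i ω + t ≤ z then (1 : ℝ) else 0))| ≤
      exp ((1 - z) / 2) * (5 * (min 1 |x| + min 1 |t|) + 20 * (beta2 ξ + beta3 ξ)) := by
  have hwidth : z - min x t - (z - max x t) = |x - t| := by
    rw [sub_sub_sub_cancel_left, max_sub_min_eq_abs']
  have hleft : 1 - z ≥ -(z - max x t) := by linarith [max_le hx ht]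
  refine (abs_integral_ite_add_le_sub_le (measurable_Wbari hmeas i) z x t).trans <|
    (measureReal_Wbari_mem_Icc_le hmeas hindep hL2 hmean hvar i
      (sub_le_sub_left min_le_max z)).trans ?_
  have hδ : 0 ≤ beta2 ξ + beta3 ξ := add_nonneg beta2_nonneg beta3_nonneg
  rw [hwidth]
  gcongr
  exact min_one_abs_sub_le x t

lemma abs_integral_ite_Wbari_add_xbar_sub_le (i : Fin n) (z : ℝ) {t : ℝ} (ht : t ≤ 1) :
    |∫ ω, ((if Wbari ξ i ω + xbar ξ i ω ≤ z then (1 : ℝ) else 0)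
        - (if Wbari ξ i ω + t ≤ z then (1 : ℝ) else 0))| ≤
      exp ((1 - z) / 2) *
        (5 * ((∫ ω, min 1 |xbar ξ i ω|) + min 1 |t|) + 20 * (beta2 ξ + beta3 ξ)) := by
  have hmin : Integrable (fun ω ↦ min 1 |xbar ξ i ω|) :=
    integrable_min_one_abs ((memLp_xbar hL2 i).integrable one_le_two)
  have hψ : Integrable (fun ω ↦ exp ((1 - z) / 2) *
      (5 * (min 1 |xbar ξ i ω| + min 1 |t|) + 20 * (beta2 ξ + beta3 ξ))) :=
    (((hmin.add (integrable_const _)).const_mul 5).add (integrable_const _)).const_mul _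
  have hk : Measurable (Function.uncurry fun x w : ℝ ↦
      (if w + x ≤ z then (1 : ℝ) else 0) - (if w + t ≤ z then (1 : ℝ) else 0)) :=
    (Measurable.ite (measurableSet_le (by fun_prop) measurable_const) measurable_const
      measurable_const).sub (Measurable.ite (measurableSet_le (by fun_prop) measurable_const)
      measurable_const measurable_const)
  calc _ ≤ ∫ ω, exp ((1 - z) / 2) *
        (5 * (min 1 |xbar ξ i ω| + min 1 |t|) + 20 * (beta2 ξ + beta3 ξ)) :=
        abs_integral_le_integral_of_indepFun (measurable_xbar hmeas i) (measurable_Wbari hmeas i)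
          (indepFun_xbar_Wbari hmeas hindep i) hk (C := 1) (fun x w ↦ by split_ifs <;> simp)
          (ψ := fun x ↦ exp ((1 - z) / 2) *
            (5 * (min 1 |x| + min 1 |t|) + 20 * (beta2 ξ + beta3 ξ))) hψ (ae_of_all _ fun ω ↦
            abs_integral_ite_Wbari_add_sub_le hmeas hindep hL2 hmean hvar i z
              (upperTrunc_le_one _) ht)
    _ = _ := by
        rw [integral_const_mul, integral_add _ (integrable_const _), integral_const_mul,
          integral_add hmin (integrable_const _)]
        · simp
        · exact (hmin.add (integrable_const _)).const_mul 5

lemma abs_setIntegral_mul_Kbar_le (i : Fin n) (z : ℝ) :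
    |∫ t in Set.Iic (1 : ℝ),
        (∫ ω, ((if Wbari ξ i ω + xbar ξ i ω ≤ z then (1 : ℝ) else 0)
          - (if Wbari ξ i ω + t ≤ z then (1 : ℝ) else 0))) * Kbar ξ i t| ≤
      exp ((1 - z) / 2) * (10 * ((∫ ω, tailSq (ξ i ω)) + ∫ ω, bodyCube (ξ i ω))
        + 20 * (beta2 ξ + beta3 ξ) * ∫ ω, ξ i ω ^ 2) := by
  have hδ : 0 ≤ beta2 ξ + beta3 ξ := add_nonneg beta2_nonneg beta3_nonneg
  have hx := memLp_xbar hL2 i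
  set δ := beta2 ξ + beta3 ξ
  set m := ∫ ω, min 1 |xbar ξ i ω|
  set e := exp ((1 - z) / 2)
  let g (u : ℝ) : ℝ := e * (5 * m + 20 * δ) + e * 5 * min 1 u
  have hg : Monotone g := fun u v huv ↦ by simp only [g]; gcongr
  have hg0 : 0 ≤ g 0 := by simp only [g]; positivity
  have hD (t : ℝ) (ht : t ≤ 1) := (abs_integral_ite_Wbari_add_xbar_sub_le hmeas hindep hL2 hmean
    hvar i z ht).trans_eq (show e * (5 * (m + min 1 |t|) + 20 * δ) = g |t| by simp only [g]; ring)
  calc _ ≤ ∫ ω, g |xbar ξ i ω| * xbar ξ i ω ^ 2 :=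
        abs_setIntegral_mul_integral_steinKernel_le (measurable_xbar hmeas i) measurableSet_Iic
          hg hg0 hD (integrable_add_mul_min_one_abs_mul_sq hx _ _)
    _ = e * (5 * (m * ∫ ω, xbar ξ i ω ^ 2) + 5 * (∫ ω, min 1 |xbar ξ i ω| * xbar ξ i ω ^ 2)
          + 20 * δ * ∫ ω, xbar ξ i ω ^ 2) := by
        rw [integral_add_mul_min_one_abs_mul_sq hx]
        ring
    _ ≤ e * (5 * (∫ ω, min 1 |xbar ξ i ω| * xbar ξ i ω ^ 2)
          + 5 * (∫ ω, min 1 |xbar ξ i ω| * xbar ξ i ω ^ 2) + 20 * δ * ∫ ω, ξ i ω ^ 2) := by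
        gcongr e * (5 * ?_ + _ + 20 * δ * ?_)
        · exact integral_min_one_abs_mul_integral_sq_le hx
        · exact integral_xbar_sq_le hL2 i
    _ = e * (10 * (∫ ω, min 1 |xbar ξ i ω| * xbar ξ i ω ^ 2) + 20 * δ * ∫ ω, ξ i ω ^ 2) := by ring
    _ ≤ _ := by
        gcongr
        exact integral_min_one_abs_mul_upperTrunc_sq_le (hL2 i)

end LeaveOneOut

theorem R21_bound_general
    {Ω : Type*} [MeasureSpace Ω] [IsProbabilityMeasure (ℙ : Measure Ω)]
    {n : ℕ} (ξ : Fin n → Ω → ℝ)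
    (hmeas : ∀ i, Measurable (ξ i))
    (hindep : iIndepFun ξ ℙ)
    (hL2 : ∀ i, MemLp (ξ i) 2 ℙ)
    (hmean : ∀ i, ∫ ω, ξ i ω = 0)
    (hvar : ∑ i, ∫ ω, (ξ i ω) ^ 2 = 1)
    (z : ℝ) :
    |∑ i, ∫ t in Set.Iic (1 : ℝ),
        (∫ ω, ((if Wbari ξ i ω + xbar ξ i ω ≤ z then (1 : ℝ) else 0)
          - (if Wbari ξ i ω + t ≤ z then (1 : ℝ) else 0))) * Kbar ξ i t|
      ≤ 30 * Real.exp ((1 / 2) : ℝ) * Real.exp (-z / 2) * (beta2 ξ + beta3 ξ) :=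
  calc _ ≤ ∑ i, exp ((1 - z) / 2) * (10 * ((∫ ω, tailSq (ξ i ω)) + ∫ ω, bodyCube (ξ i ω))
          + 20 * (beta2 ξ + beta3 ξ) * ∫ ω, ξ i ω ^ 2) :=
        (Finset.abs_sum_le_sum_abs _ _).trans <| Finset.sum_le_sum fun i _ ↦
          abs_setIntegral_mul_Kbar_le hmeas hindep hL2 hmean hvar i z
    _ = exp ((1 - z) / 2) * (30 * (beta2 ξ + beta3 ξ)) := by
        rw [← Finset.mul_sum, Finset.sum_add_distrib, ← Finset.mul_sum, ← Finset.mul_sum,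
          ← beta2_add_beta3_eq_sum, hvar]
        ring
    _ = 30 * exp (1 / 2) * exp (-z / 2) * (beta2 ξ + beta3 ξ) := by
        rw [mul_assoc 30, ← exp_add, ← add_div, ← sub_eq_add_neg]
        ring

/-- Bound (4.25) on R21. -/
theorem R21_bound
    {Ω : Type*} [MeasureSpace Ω] [IsProbabilityMeasure (ℙ : Measure Ω)]
    {n : ℕ} (ξ : Fin n → Ω → ℝ)
    (hmeas : ∀ i, Measurable (ξ i))
    (hindep : iIndepFun ξ ℙ)
    (hL2 : ∀ i, MemLp (ξ i) 2 ℙ)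
    (hmean : ∀ i, ∫ ω, ξ i ω = 0)
    (hvar : ∑ i, ∫ ω, (ξ i ω) ^ 2 = 1)
    (z : ℝ) (hz : 2 < z) :
    |∑ i, ∫ t in Set.Iic (1 : ℝ),
        (∫ ω, ((if Wbari ξ i ω + xbar ξ i ω ≤ z then (1 : ℝ) else 0)
          - (if Wbari ξ i ω + t ≤ z then (1 : ℝ) else 0))) * Kbar ξ i t|
      ≤ 30 * Real.exp ((1 / 2) : ℝ) * Real.exp (-z / 2) * (beta2 ξ + beta3 ξ) :=
  R21_bound_general ξ hmeas hindep hL2 hmean hvar z
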